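/- (Trading an information qubit for an ebit.) Let n, k, c, d be integers with n ≥ 1 and k ≥ 1, and suppose S ⊆ V_n is an F₂-subspace with dim S = n−k+c, dim(S ∩ S^⊥) = n−k−c, and every element of S^⊥ \ (S ∩ S^⊥) has Pauli weight at least d. Then there exists an F₂-subspace S' ⊆ V_n with dim S' = n−(k−1)+(c+1), dim(S' ∩ S'^⊥) = n−(k−1)−(c+1), and every element of S'^⊥ \ (S' ∩ S'^⊥) has Pauli weight at least d. That is, the existence of an [[n,k,d;c]] EAQEC code implies the existence of an [[n,k−1,d';c+1]] EAQEC code with d' ≥ d. -/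

import Mathlib

open Finset

/-- The binary symplectic space modelling `n`-qubit Pauli operators modulo phases. -/
abbrev V (n : ℕ) := (Fin n → ZMod 2) × (Fin n → ZMod 2)

/-- The Pauli weight of `v = (x, z)`: the number of indices where `(x i, z i) ≠ (0,0)`. -/
def wt {n : ℕ} (v : V n) : ℕ :=
  (Finset.univ.filter fun i => ¬(v.1 i = 0 ∧ v.2 i = 0)).card

/-- The binary symplectic product. -/
def sympl {n : ℕ} (u v : V n) : ZMod 2 :=
  ∑ i, (u.1 i * v.2 i + u.2 i * v.1 i)

lemma sympl_add_left {n : ℕ} (a b w : V n) :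
    sympl (a + b) w = sympl a w + sympl b w := by
  simp only [sympl, Prod.fst_add, Prod.snd_add, Pi.add_apply, ← Finset.sum_add_distrib]
  exact Finset.sum_congr rfl fun i _ => by ring

lemma sympl_smul_left {n : ℕ} (c : ZMod 2) (a w : V n) :
    sympl (c • a) w = c * sympl a w := by
  simp only [sympl, Prod.smul_fst, Prod.smul_snd, Pi.smul_apply, smul_eq_mul,
    Finset.mul_sum]
  exact Finset.sum_congr rfl fun i _ => by ring

/-- The symplectic dual `W^⊥` of a subspace `W ⊆ V n`. -/
def sdual {n : ℕ} (W : Submodule (ZMod 2) (V n)) : Submodule (ZMod 2) (V n) where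
  carrier := {u | ∀ w ∈ W, sympl u w = 0}
  add_mem' := fun ha hb w hw => by
    rw [sympl_add_left, ha w hw, hb w hw, add_zero]
  zero_mem' := fun w hw => by simp [sympl]
  smul_mem' := fun c a ha w hw => by rw [sympl_smul_left, ha w hw, mul_zero]

open scoped Classical

/-! Since `k ≥ 1`, a dimension count shows `¬ S^⊥ ≤ S`, and as `S^⊥⊥ = S` there are `x, y ∈ S^⊥`
with `λ(x, y) ≠ 0`. The plane `H` they span is nondegenerate and orthogonal to `S`, so passing to
`S ⊔ H` raises the dimension by two, keeps the radical, and shrinks the dual. As the weight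
condition only concerns dual vectors outside the radical, it is inherited. -/

section BilinForm

open Module Submodule
open LinearMap (BilinForm)

section Semiring

variable {R E : Type*} [CommSemiring R] [AddCommMonoid E] [Module R E] {B : BilinForm R E}

lemma orthogonal_sup (S T : Submodule R E) :
    B.orthogonal (S ⊔ T) = B.orthogonal S ⊓ B.orthogonal T := by
  refine le_antisymm (le_inf (B.orthogonal_le le_sup_left) (B.orthogonal_le le_sup_right)) ?_
  rintro v ⟨hvS, hvT⟩ _ hw
  obtain ⟨s, hs, t, ht, rfl⟩ := mem_sup.mp hw
  rw [map_add, LinearMap.add_apply, hvS s hs, hvT t ht, add_zero]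

lemma le_orthogonal_comm (hB : B.IsRefl) {S T : Submodule R E} :
    S ≤ B.orthogonal T ↔ T ≤ B.orthogonal S :=
  ⟨fun h t ht s hs => hB t s (h hs t ht), fun h s hs t ht => hB s t (h ht s hs)⟩

end Semiring

section Ring

variable {R E : Type*} [CommRing R] [AddCommGroup E] [Module R E] {B : BilinForm R E}

lemma sup_inf_orthogonal_sup_of_le_orthogonal (hB : B.IsRefl) {S H : Submodule R E}
    (hHS : H ≤ B.orthogonal S) (hH : Disjoint H (B.orthogonal H)) :
    (S ⊔ H) ⊓ B.orthogonal (S ⊔ H) = S ⊓ B.orthogonal S := by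
  have hSH : S ⊓ B.orthogonal S ≤ B.orthogonal H :=
    inf_le_left.trans ((le_orthogonal_comm hB).mp hHS)
  calc (S ⊔ H) ⊓ B.orthogonal (S ⊔ H)
      = (H ⊔ S) ⊓ B.orthogonal S ⊓ B.orthogonal H := by
        rw [orthogonal_sup, ← inf_assoc, sup_comm]
    _ = (S ⊓ B.orthogonal S ⊔ H) ⊓ B.orthogonal H := by
        rw [sup_inf_assoc_of_le S hHS, sup_comm]
    _ = S ⊓ B.orthogonal S ⊔ H ⊓ B.orthogonal H := sup_inf_assoc_of_le H hSH
    _ = S ⊓ B.orthogonal S := by rw [hH.eq_bot, sup_bot_eq]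

variable [NoZeroDivisors R] {x y : E}

lemma coeff_eq_zero_of_apply_pair_eq_zero (hB : B.IsAlt) (hxy : B x y ≠ 0) {a b : R}
    (hx : B x (a • x + b • y) = 0) (hy : B y (a • x + b • y) = 0) : a = 0 ∧ b = 0 := by
  have hyx : B y x ≠ 0 := mt (hB.isRefl y x) hxy
  simp only [map_add, map_smul, smul_eq_mul, hB.self_eq_zero, mul_zero, zero_add, add_zero]
    at hx hy
  exact ⟨(mul_eq_zero.mp hy).resolve_right hyx, (mul_eq_zero.mp hx).resolve_right hxy⟩

lemma disjoint_span_pair_orthogonal (hB : B.IsAlt) (hxy : B x y ≠ 0) :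
    Disjoint (span R {x, y}) (B.orthogonal (span R {x, y})) := by
  rw [disjoint_def]
  intro v hv hv'
  obtain ⟨a, b, rfl⟩ := mem_span_pair.mp hv
  obtain ⟨rfl, rfl⟩ := coeff_eq_zero_of_apply_pair_eq_zero hB hxy
    (hv' x (mem_span_of_mem (by simp))) (hv' y (mem_span_of_mem (by simp)))
  simp

lemma finrank_span_pair_of_apply_ne_zero (hB : B.IsAlt) (hxy : B x y ≠ 0) :
    finrank R (span R {x, y}) = 2 := by
  have : Nontrivial R := ⟨_, _, hxy⟩
  have : IsDomain R := NoZeroDivisors.to_isDomain R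
  have hli : LinearIndependent R ![x, y] := LinearIndependent.pair_iff.mpr fun a b hab =>
    coeff_eq_zero_of_apply_pair_eq_zero hB hxy (by rw [hab, map_zero]) (by rw [hab, map_zero])
  rw [← Matrix.range_cons_cons_empty x y ![], finrank_span_eq_card hli, Fintype.card_fin]

end Ring

section Field

variable {K E : Type*} [Field K] [AddCommGroup E] [Module K E] {B : BilinForm K E}

theorem exists_finrank_eq_add_two_of_not_isotropic_orthogonal (hB : B.IsAlt) (S : Submodule K E)
    [FiniteDimensional K S] (hS : ¬ B.orthogonal S ≤ B.orthogonal (B.orthogonal S)) :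
    ∃ T, S ≤ T ∧ finrank K T = finrank K S + 2 ∧
      T ⊓ B.orthogonal T = S ⊓ B.orthogonal S := by
  obtain ⟨y, hy, x, hx, hxy⟩ : ∃ y ∈ B.orthogonal S, ∃ x ∈ B.orthogonal S, B x y ≠ 0 := by
    simpa [SetLike.not_le_iff_exists] using hS
  set H := span K {x, y}
  have : FiniteDimensional K H := .span_of_finite K (Set.toFinite _)
  have hHS : H ≤ B.orthogonal S := span_le.mpr (Set.pair_subset hx hy)
  have hH : Disjoint H (B.orthogonal H) := disjoint_span_pair_orthogonal hB hxy
  have hSH : Disjoint S H := (hH.mono_right ((le_orthogonal_comm hB.isRefl).mp hHS)).symm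
  have hfin : finrank K ↥(S ⊔ H) = finrank K S + 2 := by
    rw [← finrank_span_pair_of_apply_ne_zero hB hxy, ← finrank_sup_add_finrank_inf_eq,
      hSH.eq_bot, finrank_bot, add_zero]
  exact ⟨S ⊔ H, le_sup_left, hfin,
    sup_inf_orthogonal_sup_of_le_orthogonal hB.isRefl hHS hH⟩

end Field

end BilinForm

section Symplectic

variable {n : ℕ}

lemma sympl_comm (u v : V n) : sympl u v = sympl v u :=
  Finset.sum_congr rfl fun i _ => by ring

lemma sympl_self (v : V n) : sympl v v = 0 :=
  Finset.sum_eq_zero fun i _ => by rw [mul_comm (v.2 i), CharTwo.add_self_eq_zero]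

/-- The symplectic product `λ` bundled as a bilinear form, which makes the library's orthogonal
complements available for `sdual`. -/
def symplForm (n : ℕ) : LinearMap.BilinForm (ZMod 2) (V n) :=
  LinearMap.mk₂ (ZMod 2) sympl sympl_add_left sympl_smul_left
    (fun u v w => by simp only [sympl_comm u, sympl_add_left])
    (fun a u v => by simp only [sympl_comm u, sympl_smul_left, smul_eq_mul])

lemma symplForm_isAlt (n : ℕ) : (symplForm n).IsAlt := sympl_self

lemma symplForm_nondegenerate (n : ℕ) : (symplForm n).Nondegenerate := by
  refine (symplForm_isAlt n).isRefl.nondegenerate_iff_separatingLeft.mpr fun v hv => ?_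
  ext i
  · simpa [symplForm, sympl, Pi.single_apply] using hv (0, Pi.single i 1)
  · simpa [symplForm, sympl, Pi.single_apply] using hv (Pi.single i 1, 0)

lemma sdual_eq_orthogonal (W : Submodule (ZMod 2) (V n)) :
    sdual W = (symplForm n).orthogonal W :=
  Submodule.ext fun u => forall₂_congr fun w _ => by rw [sympl_comm u w]; rfl

lemma finrank_add_finrank_sdual (W : Submodule (ZMod 2) (V n)) :
    Module.finrank (ZMod 2) W + Module.finrank (ZMod 2) (sdual W) = n + n := by
  have hV : Module.finrank (ZMod 2) (V n) = n + n := by simp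
  rw [sdual_eq_orthogonal, LinearMap.BilinForm.finrank_orthogonal (symplForm_nondegenerate n),
    Nat.add_sub_cancel' W.finrank_le, hV]

lemma sdual_sdual (W : Submodule (ZMod 2) (V n)) : sdual (sdual W) = W := by
  rw [sdual_eq_orthogonal, sdual_eq_orthogonal, LinearMap.BilinForm.orthogonal_orthogonal
    (symplForm_nondegenerate n) (symplForm_isAlt n).isRefl]

lemma sdual_anti {S T : Submodule (ZMod 2) (V n)} (h : S ≤ T) : sdual T ≤ sdual S :=
  fun _ hv w hw => hv w (h hw)

theorem exists_finrank_eq_add_two_of_not_sdual_le {S : Submodule (ZMod 2) (V n)}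
    (hS : ¬ sdual S ≤ S) :
    ∃ T, S ≤ T ∧ Module.finrank (ZMod 2) T = Module.finrank (ZMod 2) S + 2 ∧
      T ⊓ sdual T = S ⊓ sdual S := by
  have hS' : ¬ sdual S ≤ sdual (sdual S) := by rwa [sdual_sdual]
  simp only [sdual_eq_orthogonal] at hS' ⊢
  exact exists_finrank_eq_add_two_of_not_isotropic_orthogonal (symplForm_isAlt n) S hS'

end Symplectic

/-- Trading an information qubit for an ebit: an `[[n,k,d;c]]` EAQEC
code with `k ≥ 1` yields an `[[n,k−1,d';c+1]]` EAQEC code with `d' ≥ d`. -/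
theorem EAQEC_trade_info_for_ebit (n k c d : ℕ) (hn : 1 ≤ n) (hk : 1 ≤ k)
    (S : Submodule (ZMod 2) (V n))
    (hdim : Module.finrank (ZMod 2) S + k = n + c)
    (hrad : Module.finrank (ZMod 2) (S ⊓ sdual S : Submodule (ZMod 2) (V n)) + k + c = n)
    (hdist : ∀ v ∈ sdual S, v ∉ (S ⊓ sdual S : Submodule (ZMod 2) (V n)) → d ≤ wt v) :
    ∃ S' : Submodule (ZMod 2) (V n),
      Module.finrank (ZMod 2) S' + (k - 1) = n + (c + 1) ∧
      Module.finrank (ZMod 2) (S' ⊓ sdual S' : Submodule (ZMod 2) (V n)) + (k - 1) + (c + 1)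
        = n ∧
      ∀ v ∈ sdual S', v ∉ (S' ⊓ sdual S' : Submodule (ZMod 2) (V n)) → d ≤ wt v := by
  have hS : ¬ sdual S ≤ S := fun hle => by
    rw [inf_eq_right.mpr hle] at hrad
    have := finrank_add_finrank_sdual S
    omega
  obtain ⟨S', hSS', hfin, hrad'⟩ := exists_finrank_eq_add_two_of_not_sdual_le hS
  refine ⟨S', by omega, by rw [hrad']; omega, fun v hv hv' => ?_⟩
  rw [hrad'] at hv'
  exact hdist v (sdual_anti hSS' hv) hv'
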